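/- Let B ⊂ A be a regular irreducible inclusion of simple unital C*-algebras with common unit admitting a finite-index conditional expectation, where irreducible means C_A(B) = ℂ·1. Then there exist a finite group G (isomorphic to the Weyl group N_A(B)/U(B)) and a map u : G → N_A(B) with u_e = 1 such that: (i) σ(g,h) := u_g u_h u_{gh}* is a unitary of B for all g, h ∈ G; (ii) for every g ≠ e the automorphism Ad(u_g)|_B of B is outer; and (iii) every x ∈ A can be written uniquely as x = Σ_{g ∈ G} u_g b_g with b_g ∈ B. (Thus (α, σ) with α_g = Ad(u_g)|_B is an outer cocycle action of the Weyl group G on B and (B ⊂ A) ≅ (B ⊂ B ⋊^r_{(α,σ)} G).) -/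

import Mathlib

/-!
Irreducibility turns every `w ∈ N_A(B)` into a dichotomy: `w* E(w)` commutes with `B`, hence is a
scalar, so either `w ∈ B` or `E(w) = 0` (`condExp_eq_zero_of_normalizer`). Consequently unitaries
`u_g` representing distinct classes of the Weyl group are orthonormal for the `B`-valued inner
product `⟨x, y⟩ = E(x* y)`, which yields at once the uniqueness of the coefficients,
`b_g = E(u_g* x)`. Outerness is the same irreducibility argument applied to `v* u_g`.

Finiteness of the Weyl group (`exists_card_bound`). Let `(λ_k)` be the quasi-basis and let
`u_1, …, u_m` be orthonormal unitaries. Multiplying the quasi-basis expansion of `u_i*` by `u_i` and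
summing over `i` gives `m · 1 = ∑_k z_k λ_k*`, where `z_k = ∑_i u_i E(u_i* λ_k)` is the orthogonal
projection of `λ_k` onto `∑ u_i B`. Bessel's inequality gives `‖E(z_k* z_k)‖ ≤ ‖E(λ_k* λ_k)‖`, and
the Cauchy–Schwarz inequality together with the quasi-basis expansion bounds `‖z‖` by a constant
times `‖E(z* z)‖^{1/2}`. So `m` is bounded independently of the choice of the `u_i`.

Existence of the expansion. The set of `x` with `x = ∑_g u_g E(u_g* x)` is a linear subspace, closed
because `E` is continuous, and it contains `N_A(B)`. As `N_A(B)` is a self-adjoint multiplicative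
monoid, its span is already a *-algebra, and regularity says that this span is dense.
-/

namespace RegularInclusion

variable {A : Type*} [NormedRing A] [StarRing A] [CStarRing A] [CompleteSpace A]
  [NormedAlgebra ℂ A] [StarModule ℂ A]

/-- A conditional expectation of `A` onto the subset `B`: a `ℂ`-linear positive
`B`-bimodular projection of `A` onto `B`. -/
def IsCondExp (B : Set A) (E : A →ₗ[ℂ] A) : Prop :=
  (∀ x, E x ∈ B) ∧ (∀ b ∈ B, E b = b) ∧
  (∀ x, ∃ y, E (star x * x) = star y * y) ∧
  (∀ b₁ ∈ B, ∀ b₂ ∈ B, ∀ x, E (b₁ * x * b₂) = b₁ * E x * b₂)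

/-- `l` is a right quasi-basis for `E`, witnessing finite index. -/
def IsRightQB (E : A →ₗ[ℂ] A) {n : ℕ} (l : Fin n → A) : Prop :=
  ∀ x, x = ∑ i, E (x * l i) * star (l i)

/-- The centralizer (relative commutant) `C_A(B)` of `B` in `A`. -/
def cent (B : Set A) : Set A := {x | ∀ b ∈ B, x * b = b * x}

/-- The normalizer `N_A(B) = {u ∈ U(A) : uBu* = B}` of `B` in `A`. -/
def normalizer (B : Set A) : Set A :=
  {u | u ∈ unitary A ∧ (fun x => u * x * star u) '' B = B}

/-- The set `U(B)` of unitaries of `B`. -/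
def UB (B : Set A) : Set A := {b | b ∈ B ∧ b ∈ unitary A}

/-- The set `U(B)·U(C_A(B))` of products of a unitary of `B` and a unitary of
the centralizer of `B`. -/
def UBC (B : Set A) : Set A :=
  {x | ∃ b c, b ∈ B ∧ b ∈ unitary A ∧ c ∈ cent B ∧ c ∈ unitary A ∧ x = b * c}

/-- Simplicity of the C*-algebra (given as the subset `S` of `A`): the only closed
two-sided ideals of `S` are `{0}` and `S`. -/
def IsSimpleCStar (S : Set A) : Prop :=
  ∀ I : Set A, I ⊆ S → IsClosed I → (0 : A) ∈ I →
    (∀ x ∈ I, ∀ y ∈ I, x + y ∈ I) →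
    (∀ x ∈ I, ∀ b ∈ S, x * b ∈ I ∧ b * x ∈ I) →
    I = {0} ∨ I = S

/-- The intermediate C*-subalgebra `C := C*(B ∪ C_A(B))` generated by `B` and the
centralizer of `B`. -/
def genC (B : Set A) : StarSubalgebra ℂ A :=
  (StarAlgebra.adjoin ℂ (B ∪ cent B)).topologicalClosure

/-- Regularity of the inclusion `B ⊆ A`: the normalizer of `B` generates `A` as a
C*-algebra. -/
def IsRegular (B : Set A) : Prop :=
  (StarAlgebra.adjoin ℂ (normalizer B)).topologicalClosure = ⊤

/-- `E₀` is the minimal conditional expectation of `A` onto `B`: the finite-index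
conditional expectation whose (scalar) Watatani index is least among all finite-index
conditional expectations onto `B`. -/
def IsMinimalCondExp (B : Set A) (E₀ : A →ₗ[ℂ] A) : Prop :=
  IsCondExp B E₀ ∧
  ∃ (r₀ : ℝ) (n : ℕ) (l : Fin n → A), IsRightQB E₀ l ∧
    (∑ i, l i * star (l i)) = (r₀ : ℂ) • 1 ∧
    ∀ E : A →ₗ[ℂ] A, IsCondExp B E → ∀ (m : ℕ) (μ : Fin m → A), IsRightQB E μ →
      ∀ r : ℝ, (∑ i, μ i * star (μ i)) = (r : ℂ) • 1 → r₀ ≤ r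

/-- A bundled finite group. -/
structure FiniteGroupData : Type 1 where
  G : Type
  [grp : Group G]
  [fin : Fintype G]

attribute [instance] FiniteGroupData.grp FiniteGroupData.fin

/-! ### Analytic properties of conditional expectations -/

section Analytic

variable {R : Type*} [CStarAlgebra R] {B : StarSubalgebra ℂ R} {E : R →ₗ[ℂ] R}

lemma IsCondExp.continuous_and_star (hE : IsCondExp (B : Set R) E) :
    Continuous E ∧ ∀ x, E (star x) = star (E x) := by
  let _ : PartialOrder R := CStarAlgebra.spectralOrder R
  have _ : StarOrderedRing R := CStarAlgebra.spectralOrderedRing R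
  have hpos : ∀ x, 0 ≤ x → 0 ≤ E x := by
    intro x hx
    obtain ⟨y, rfl⟩ := CStarAlgebra.nonneg_iff_eq_star_mul_self.mp hx
    obtain ⟨z, hz⟩ := hE.2.2.1 y
    rw [hz]
    exact star_mul_self_nonneg z
  let F : R →ₚ[ℂ] R := PositiveLinearMap.mk₀ E hpos
  exact ⟨map_continuous F, fun x => map_star F x⟩

/-- The Cauchy–Schwarz inequality for `⟨y, x⟩ = E(y* x)`; the `+ 1` makes the scale factor nonzero
without a case distinction. -/
lemma IsCondExp.norm_le (hE : IsCondExp (B : Set R) E) (x y : R) :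
    ‖E (star y * x)‖ ≤ √(‖E (star y * y)‖ + 1) * √‖E (star x * x)‖ := by
  let _ : PartialOrder R := CStarAlgebra.spectralOrder R
  have _ : StarOrderedRing R := CStarAlgebra.spectralOrderedRing R
  have hstar := hE.continuous_and_star.2
  obtain ⟨hEB, hEid, hEpos, hEmod⟩ := hE
  set t : ℝ := ‖E (star y * y)‖ + 1 with ht
  have htpos : 0 < t := by positivity
  set c := E (star y * x) with hc
  have hcB : c ∈ B := hEB _
  have h1 : E (star x * y) = star c := by
    rw [hc, ← hstar]; simp
  have hmodr : ∀ z, ∀ b ∈ B, E (z * b) = E z * b := fun z b hb => by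
    simpa using hEmod 1 (one_mem B) b hb z
  have hmodl : ∀ z, ∀ b ∈ B, E (b * z) = b * E z := fun z b hb => by
    simpa using hEmod b hb 1 (one_mem B) z
  -- Positivity of `E` at `t x - y c` is the whole inequality.
  have key : E (star ((t : ℂ) • x - y * c) * ((t : ℂ) • x - y * c))
      = ((t : ℂ) * t) • E (star x * x) - ((2 * t : ℝ) : ℂ) • (star c * c)
        + star c * E (star y * y) * c := by
    have e1 : star ((t : ℂ) • x - y * c) * ((t : ℂ) • x - y * c)
        = ((t : ℂ) * t) • (star x * x) - (t : ℂ) • (star x * y * c)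
          - (t : ℂ) • (star c * (star y * x)) + star c * (star y * y * c) := by
      simp only [star_sub, star_smul, star_mul, sub_mul, mul_sub, smul_mul_assoc,
        mul_smul_comm, Complex.star_def, Complex.conj_ofReal, mul_assoc, smul_sub, mul_smul]
      abel
    rw [e1]
    simp only [map_add, map_sub, map_smul]
    rw [hmodr _ c hcB, hmodl _ _ (star_mem hcB), hmodl _ _ (star_mem hcB), hmodr _ c hcB, h1,
      ← hc]
    push_cast
    rw [two_mul, add_smul, mul_assoc]
    abel
  obtain ⟨z, hz⟩ := hEpos ((t : ℂ) • x - y * c)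
  have hnn : 0 ≤ E (star ((t : ℂ) • x - y * c) * ((t : ℂ) • x - y * c)) := by
    rw [hz]; exact star_mul_self_nonneg z
  rw [key] at hnn
  have hsa : IsSelfAdjoint (E (star y * y)) := by
    rw [IsSelfAdjoint, ← hstar]; simp
  have hle : star c * E (star y * y) * c ≤ t • (star c * c) := by
    refine (CStarAlgebra.star_left_conjugate_le_norm_smul hsa).trans ?_
    exact smul_le_smul_of_nonneg_right (by simp [ht]) (star_mul_self_nonneg c)
  have hcc : t • (star c * c) ≤ (t * t) • E (star x * x) := by
    have h2 : ((t : ℂ) * t) • E (star x * x) = (t * t) • E (star x * x) := by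
      rw [← Complex.ofReal_mul, Complex.coe_smul]
    have h3 : ((2 * t : ℝ) : ℂ) • (star c * c) = t • (star c * c) + t • (star c * c) := by
      rw [Complex.coe_smul, two_mul, add_smul]
    rw [h2, h3] at hnn
    have h4 := hnn.trans (add_le_add_right hle _)
    rw [← sub_nonneg]
    convert h4 using 1
    abel
  have hn := CStarAlgebra.norm_le_norm_of_nonneg_of_le
    (smul_nonneg htpos.le (star_mul_self_nonneg c)) hcc
  rw [norm_smul, norm_smul, CStarRing.norm_star_mul_self, Real.norm_of_nonneg htpos.le,
    Real.norm_of_nonneg (by positivity), mul_assoc] at hn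
  have hcsq : ‖c‖ * ‖c‖ ≤ t * ‖E (star x * x)‖ := le_of_mul_le_mul_left hn htpos
  rw [← Real.sqrt_mul htpos.le]
  apply Real.le_sqrt_of_sq_le
  rw [sq]
  exact hcsq

/-- Bessel's inequality, for `z` orthogonal to `x - z` in the sense of `⟨x, y⟩ = E(x* y)`. -/
lemma IsCondExp.norm_le_of_orthogonal (hE : IsCondExp (B : Set R) E) {x z : R}
    (h : E (star z * (x - z)) = 0) : ‖E (star z * z)‖ ≤ ‖E (star x * x)‖ := by
  let _ : PartialOrder R := CStarAlgebra.spectralOrder R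
  have _ : StarOrderedRing R := CStarAlgebra.spectralOrderedRing R
  have hstar := hE.continuous_and_star.2
  have h' : E (star (x - z) * z) = 0 := by
    have := hstar (star z * (x - z))
    simpa [h] using this
  have hsum : E (star x * x) = E (star z * z) + E (star (x - z) * (x - z)) := by
    have e1 : star x * x = star z * z + star (x - z) * (x - z)
        + (star z * (x - z) + star (x - z) * z) := by
      simp only [star_sub, sub_mul, mul_sub]
      abel
    rw [e1]
    simp only [map_add, h, h', add_zero]
  obtain ⟨a, ha⟩ := hE.2.2.1 z
  obtain ⟨b, hb⟩ := hE.2.2.1 (x - z)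
  rw [hsum]
  apply CStarAlgebra.norm_le_norm_of_nonneg_of_le
  · rw [ha]; exact star_mul_self_nonneg a
  · rw [hb]; exact le_add_of_nonneg_right (star_mul_self_nonneg b)

/-- Finite index bounds the size of an orthonormal family of unitaries. -/
lemma exists_card_bound [Nontrivial R] (hE : IsCondExp (B : Set R) E) {n : ℕ} {l : Fin n → R}
    (hl : IsRightQB E l) (ι : Type*) :
    ∃ M : ℝ, ∀ (s : Finset ι) (u : ι → R), (∀ i, u i ∈ unitary R) →
      (∀ i j, i ≠ j → E (star (u i) * u j) = 0) → (s.card : ℝ) ≤ M := by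
  classical
  have hstar := hE.continuous_and_star.2
  have hmodr : ∀ z, ∀ b ∈ B, E (z * b) = E z * b := fun z b hb => by
    simpa using hE.2.2.2 1 (one_mem B) b hb z
  have hmodl : ∀ z, ∀ b ∈ B, E (b * z) = b * E z := fun z b hb => by
    simpa using hE.2.2.2 b hb 1 (one_mem B) z
  set K : ℝ := ∑ k, √(‖E (star (l k) * l k)‖ + 1) * ‖l k‖ with hK
  have hbound : ∀ z, ‖z‖ ≤ K * √‖E (star z * z)‖ := by
    intro z
    have h1 := hl (star z)
    have h3 : ‖z‖ = ‖∑ k, E (star z * l k) * star (l k)‖ := by rw [← h1, norm_star]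
    rw [h3, hK, Finset.sum_mul]
    refine (norm_sum_le _ _).trans (Finset.sum_le_sum fun k _ => ?_)
    refine (norm_mul_le _ _).trans ?_
    have h2 : ‖E (star z * l k)‖ = ‖E (star (l k) * z)‖ := by
      rw [← norm_star, ← hstar]; simp
    rw [norm_star, h2, mul_right_comm]
    exact mul_le_mul_of_nonneg_right (hE.norm_le z (l k)) (norm_nonneg _)
  have hK0 : 0 ≤ K := Finset.sum_nonneg fun k _ => by positivity
  refine ⟨∑ k, K * √‖E (star (l k) * l k)‖ * ‖l k‖, fun s u hu horth => ?_⟩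
  have horth' : ∀ i j, E (star (u i) * u j) = if i = j then 1 else 0 := by
    intro i j
    split_ifs with h
    · rw [← h, Unitary.star_mul_self_of_mem (hu i), hE.2.1 1 (one_mem B)]
    · exact horth i j h
  let z : R → R := fun x => ∑ i ∈ s, u i * E (star (u i) * x)
  have hz : ∀ x, E (star (z x) * (x - z x)) = 0 := by
    intro x
    have h0 : ∀ i ∈ s, E (star (u i) * (x - z x)) = 0 := by
      intro i hi
      have h1 : E (star (u i) * z x) = E (star (u i) * x) := by
        simp only [z, Finset.mul_sum, map_sum]
        rw [Finset.sum_eq_single_of_mem i hi]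
        · rw [← mul_assoc, hmodr _ _ (hE.1 _), horth', if_pos rfl, one_mul]
        · intro j _ hj
          rw [← mul_assoc, hmodr _ _ (hE.1 _), horth', if_neg hj.symm, zero_mul]
      rw [mul_sub, map_sub, h1, sub_self]
    have h2 : star (z x) * (x - z x)
        = ∑ i ∈ s, star (E (star (u i) * x)) * (star (u i) * (x - z x)) := by
      conv_lhs => rw [show star (z x) = ∑ i ∈ s, star (E (star (u i) * x)) * star (u i) by
        simp only [z, star_sum, star_mul]]
      rw [Finset.sum_mul]
      simp only [mul_assoc]
    rw [h2, map_sum]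
    refine Finset.sum_eq_zero fun i hi => ?_
    have hmem : star (E (star (u i) * x)) ∈ B := star_mem (hE.1 _)
    rw [hmodl _ _ hmem, h0 i hi, mul_zero]
  have hcard : (s.card : R) = ∑ k, z (l k) * star (l k) := by
    simp only [z, Finset.sum_mul]
    rw [Finset.sum_comm]
    have : ∀ i ∈ s, ∑ k, u i * E (star (u i) * l k) * star (l k) = 1 := by
      intro i _
      simp only [mul_assoc]
      rw [← Finset.mul_sum, ← hl (star (u i)), Unitary.mul_star_self_of_mem (hu i)]
    rw [Finset.sum_congr rfl this]
    simp
  have hnorm : (s.card : ℝ) = ‖(s.card : R)‖ := by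
    rw [← map_natCast (algebraMap ℂ R), norm_algebraMap']; simp
  rw [hnorm, hcard]
  refine (norm_sum_le _ _).trans (Finset.sum_le_sum fun k _ => ?_)
  refine (norm_mul_le _ _).trans ?_
  rw [norm_star]
  gcongr
  refine (hbound _).trans ?_
  gcongr
  exact hE.norm_le_of_orthogonal (hz _)

end Analytic

/-! ### The Weyl group -/

set_option linter.unusedSectionVars false

lemma mem_normalizer_iff {B : StarSubalgebra ℂ A} {w : A} :
    w ∈ normalizer (B : Set A) ↔
      w ∈ unitary A ∧ (∀ b ∈ B, w * b * star w ∈ B) ∧ (∀ b ∈ B, star w * b * w ∈ B) := by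
  refine and_congr_right fun hw => ⟨fun h => ⟨fun b hb => ?_, fun b hb => ?_⟩, fun h => ?_⟩
  · have : w * b * star w ∈ (fun x => w * x * star w) '' (B : Set A) := ⟨b, hb, rfl⟩
    rwa [h] at this
  · have hb' : b ∈ (B : Set A) := hb
    rw [← h] at hb'
    obtain ⟨c, hc, rfl⟩ := hb'
    have : star w * (w * c * star w) * w = (star w * w) * c * (star w * w) := by
      simp only [mul_assoc]
    simpa [this, Unitary.star_mul_self_of_mem hw] using hc
  · apply Set.Subset.antisymm
    · rintro _ ⟨b, hb, rfl⟩
      exact h.1 b hb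
    · intro b hb
      refine ⟨star w * b * w, h.2 b hb, ?_⟩
      have : w * (star w * b * w) * star w = (w * star w) * b * (w * star w) := by
        simp only [mul_assoc]
      simp [this, Unitary.mul_star_self_of_mem hw]

/-- `N_A(B)` as a subgroup of the unitary group of `A`. -/
def normalizerSubgroup (B : StarSubalgebra ℂ A) : Subgroup (unitary A) where
  carrier := {w | (w : A) ∈ normalizer (B : Set A)}
  one_mem' := mem_normalizer_iff.mpr (by simp)
  mul_mem' := by
    intro v w hv hw
    have hv := mem_normalizer_iff.mp hv
    have hw := mem_normalizer_iff.mp hw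
    refine mem_normalizer_iff.mpr ⟨(v * w).2, fun b hb => ?_, fun b hb => ?_⟩
    · have := hv.2.1 _ (hw.2.1 b hb)
      simpa [mul_assoc] using this
    · have := hw.2.2 _ (hv.2.2 b hb)
      simpa [mul_assoc] using this
  inv_mem' := by
    intro w hw
    have hw := mem_normalizer_iff.mp hw
    refine mem_normalizer_iff.mpr ⟨(w⁻¹).2, fun b hb => ?_, fun b hb => ?_⟩
    · change star (w : A) * b * star (star (w : A)) ∈ B
      simpa using hw.2.2 b hb
    · change star (star (w : A)) * b * star (w : A) ∈ B
      simpa using hw.2.1 b hb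

/-- `U(B)` as a subgroup of `N_A(B)`. -/
def unitarySubgroup (B : StarSubalgebra ℂ A) : Subgroup (normalizerSubgroup B) where
  carrier := {w | ((w : unitary A) : A) ∈ B}
  one_mem' := one_mem B
  mul_mem' := fun hv hw => mul_mem (S := StarSubalgebra ℂ A) hv hw
  inv_mem' := fun hw => star_mem (S := StarSubalgebra ℂ A) hw

instance unitarySubgroup_normal (B : StarSubalgebra ℂ A) : (unitarySubgroup B).Normal where
  conj_mem := fun _ hk w => (mem_normalizer_iff.mp w.2).2.1 _ hk

/-- The Weyl group `N_A(B)/U(B)`. -/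
abbrev Weyl (B : StarSubalgebra ℂ A) : Type _ := normalizerSubgroup B ⧸ unitarySubgroup B

lemma mk_eq_mk_iff {B : StarSubalgebra ℂ A} {v w : normalizerSubgroup B} :
    (v : Weyl B) = w ↔ ((v : unitary A) : A) * star ((w : unitary A) : A) ∈ B := by
  rw [← mul_inv_eq_one, ← QuotientGroup.mk_inv, ← QuotientGroup.mk_mul,
    QuotientGroup.eq_one_iff]
  rfl

lemma mk_eq_mk_iff' {B : StarSubalgebra ℂ A} {v w : normalizerSubgroup B} :
    (v : Weyl B) = w ↔ star ((v : unitary A) : A) * ((w : unitary A) : A) ∈ B := by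
  rw [QuotientGroup.eq]
  rfl

/-- A section of `N_A(B) → N_A(B)/U(B)` preserving the identity. -/
lemma exists_section (B : StarSubalgebra ℂ A) :
    ∃ s : Weyl B → normalizerSubgroup B, s 1 = 1 ∧ ∀ g, (s g : Weyl B) = g := by
  classical
  refine ⟨Function.update Quotient.out 1 1, by simp, fun g => ?_⟩
  by_cases h : g = 1
  · subst h; simp
  · rw [Function.update_of_ne h]
    exact Quotient.out_eq g

/-- `E` vanishes on normalizing unitaries outside `B`: `w* E(w)` commutes with `B`, so `E(w)` is a
scalar multiple of `w`, and a nonzero multiple would put `w` into `B`. -/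
lemma condExp_eq_zero_of_normalizer {B : StarSubalgebra ℂ A}
    (hirr : ∀ z ∈ cent (B : Set A), ∃ c : ℂ, z = c • (1 : A))
    {E : A →ₗ[ℂ] A} (hE : IsCondExp (B : Set A) E) {w : A}
    (hw : w ∈ normalizer (B : Set A)) (hwB : w ∉ B) : E w = 0 := by
  obtain ⟨hu, h1, h2⟩ := mem_normalizer_iff.mp hw
  have hss := Unitary.star_mul_self_of_mem hu
  have hms := Unitary.mul_star_self_of_mem hu
  obtain ⟨c, hc⟩ := hirr (star w * E w) fun b hb => by
    have e1 : E w * b = w * b * star w * E w := by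
      have hr := hE.2.2.2 1 (one_mem B) b hb w
      have hl := hE.2.2.2 _ (h1 b hb) 1 (one_mem B) w
      have hcomm : 1 * w * b = w * b * star w * w * 1 := by
        simp [mul_assoc, hss]
      rw [hcomm, hl] at hr
      simpa using hr.symm
    rw [mul_assoc, e1, ← mul_assoc, ← mul_assoc, ← mul_assoc, hss, one_mul, mul_assoc]
  have hEw : E w = c • w := by
    have : w * (star w * E w) = c • w := by rw [hc]; simp
    rwa [← mul_assoc, hms, one_mul] at this
  by_cases h0 : c = 0
  · simp [hEw, h0]
  · refine absurd ?_ hwB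
    have hmem : c⁻¹ • E w ∈ B := B.smul_mem (hE.1 w) _
    rwa [hEw, smul_smul, inv_mul_cancel₀ h0, one_smul] at hmem

lemma finite_weyl {B : StarSubalgebra ℂ A}
    (hirr : ∀ z ∈ cent (B : Set A), ∃ c : ℂ, z = c • (1 : A))
    {E : A →ₗ[ℂ] A} (hE : IsCondExp (B : Set A) E)
    {n : ℕ} {l : Fin n → A} (hl : IsRightQB E l) : Finite (Weyl B) := by
  cases subsingleton_or_nontrivial A
  · have : Subsingleton (Weyl B) :=
      ⟨fun a b => by
        induction a using QuotientGroup.induction_on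
        induction b using QuotientGroup.induction_on
        congr 1
        exact Subsingleton.elim _ _⟩
    infer_instance
  · let _ : CStarAlgebra A := {}
    obtain ⟨s, -, hs⟩ := exists_section B
    obtain ⟨M, hM⟩ := exists_card_bound hE hl (Weyl B)
    by_contra hinf
    have := not_finite_iff_infinite.mp hinf
    obtain ⟨m, hm⟩ := exists_nat_gt M
    obtain ⟨t, ht⟩ := Infinite.exists_subset_card_eq (Weyl B) m
    have := hM t (fun g => ((s g : unitary A) : A)) (fun g => (s g : unitary A).2)
      (fun i j hij => condExp_eq_zero_of_normalizer hirr hE ((s i)⁻¹ * s j).2 fun hB => hij <| by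
        rw [← hs i, ← hs j]
        exact mk_eq_mk_iff'.mpr hB)
    rw [ht] at this
    exact absurd this (not_le.mpr hm)

/-- Every finite group is isomorphic to one living in `Type`. -/
lemma exists_finiteGroupData (W : Type*) [Group W] [Finite W] :
    ∃ D : FiniteGroupData, Nonempty (D.G ≃* W) := by
  obtain ⟨n, ⟨e⟩⟩ := Finite.exists_equiv_fin W
  let _ : Group (Fin n) := e.symm.group
  exact ⟨⟨Fin n⟩, ⟨e.symm.mulEquiv⟩⟩

/-- `N_A(B)` is a self-adjoint monoid, so a subspace containing it contains the *-algebra it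
generates. -/
lemma adjoin_normalizer_le {B : StarSubalgebra ℂ A} {S : Submodule ℂ A}
    (h : normalizer (B : Set A) ⊆ S) :
    (StarAlgebra.adjoin ℂ (normalizer (B : Set A)) : Set A) ⊆ S := by
  let N : Submonoid A := (normalizerSubgroup B).toSubmonoid.map (unitary A).subtype
  have hN : (N : Set A) = normalizer (B : Set A) := by
    ext x
    constructor
    · rintro ⟨w, hw, rfl⟩
      exact hw
    · intro hx
      exact ⟨⟨x, hx.1⟩, hx, rfl⟩
  have hstar : star (normalizer (B : Set A)) ⊆ normalizer (B : Set A) := by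
    intro x hx
    have hx' : star x ∈ normalizer (B : Set A) := hx
    have := (normalizerSubgroup B).inv_mem (x := ⟨star x, hx'.1⟩) hx'
    have h2 : star (star x) ∈ normalizer (B : Set A) := this
    rwa [star_star] at h2
  intro x hx
  have hx1 : x ∈ Subalgebra.toSubmodule (Algebra.adjoin ℂ (normalizer (B : Set A))) := by
    have h3 : x ∈ (StarAlgebra.adjoin ℂ (normalizer (B : Set A))).toSubalgebra := hx
    rw [StarAlgebra.adjoin_toSubalgebra, Set.union_eq_left.mpr hstar] at h3
    exact h3
  rw [Algebra.adjoin_eq_span, ← hN, Submonoid.closure_eq, hN] at hx1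
  exact Submodule.span_le.mpr h hx1


/-- for a regular irreducible inclusion `B ⊂ A` of simple unital
C*-algebras with a finite-index conditional expectation, there are a finite group `G`
(isomorphic to the Weyl group `N_A(B)/U(B)`, via `g ↦ [u_g]`) and a map
`u : G → N_A(B)` with `u_e = 1` such that `σ(g,h) = u_g u_h u_{gh}*` is a unitary of
`B`, `Ad(u_g)|_B` is outer for `g ≠ e`, and every `x ∈ A` is uniquely `Σ_g u_g b_g`
with `b_g ∈ B`; i.e. `(α, σ)` is an outer cocycle action of the Weyl group on `B` and
`(B ⊂ A) ≅ (B ⊂ B ⋊^r_{(α,σ)} G)`. -/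
theorem irreducible_regular_inclusion_is_twisted_crossed_product
    (B : StarSubalgebra ℂ A) (hBclosed : IsClosed (B : Set A))
    (hAsimple : IsSimpleCStar (Set.univ : Set A))
    (hBsimple : IsSimpleCStar (B : Set A))
    (hreg : IsRegular (B : Set A))
    (hirr : ∀ z ∈ cent (B : Set A), ∃ c : ℂ, z = c • (1 : A))
    (E : A →ₗ[ℂ] A) (hE : IsCondExp (B : Set A) E)
    (nE : ℕ) (lE : Fin nE → A) (hlE : IsRightQB E lE) :
    ∃ (D : FiniteGroupData) (u : D.G → A),
      u 1 = 1 ∧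
      (∀ g, u g ∈ normalizer (B : Set A)) ∧
      (∀ g h : D.G, g ≠ h → u g * star (u h) ∉ UB (B : Set A)) ∧
      (∀ v ∈ normalizer (B : Set A), ∃ g, v * star (u g) ∈ UB (B : Set A)) ∧
      (∀ g h, u g * u h * star (u (g * h)) ∈ UB (B : Set A)) ∧
      (∀ g : D.G, g ≠ 1 →
        ¬ ∃ v, v ∈ (B : Set A) ∧ v ∈ unitary A ∧
          ∀ x ∈ (B : Set A), u g * x * star (u g) = v * x * star v) ∧
      (∀ x : A, ∃ b : D.G → A,
        (∀ g, b g ∈ (B : Set A)) ∧ x = ∑ g, u g * b g ∧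
        ∀ b' : D.G → A, (∀ g, b' g ∈ (B : Set A)) →
          x = ∑ g, u g * b' g → b' = b) := by
  classical
  have hfin : Finite (Weyl B) := finite_weyl hirr hE hlE
  obtain ⟨D, ⟨e⟩⟩ := exists_finiteGroupData (Weyl B)
  obtain ⟨s, hs1, hs⟩ := exists_section B
  have hcont : Continuous E := by
    let _ : CStarAlgebra A := {}
    exact hE.continuous_and_star.1
  let u : D.G → A := fun g => ((s (e g) : unitary A) : A)
  have huU : ∀ g, u g ∈ unitary A := fun g => (s (e g) : unitary A).2
  have hne : ∀ g h : D.G, g ≠ h → u g * star (u h) ∉ B := fun g h hgh hB => hgh <| by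
    apply e.injective
    rw [← hs (e g), ← hs (e h)]
    exact mk_eq_mk_iff.mpr hB
  have horth : ∀ g h : D.G, E (star (u g) * u h) = if g = h then 1 else 0 := by
    intro g h
    split_ifs with hgh
    · rw [← hgh, Unitary.star_mul_self_of_mem (huU g), hE.2.1 1 (one_mem B)]
    · refine condExp_eq_zero_of_normalizer hirr hE ((s (e g))⁻¹ * s (e h)).2 fun hB => hgh ?_
      apply e.injective
      rw [← hs (e g), ← hs (e h)]
      exact mk_eq_mk_iff'.mpr hB
  have hmodr : ∀ z, ∀ b ∈ B, E (z * b) = E z * b := fun z b hb => by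
    simpa using hE.2.2.2 1 (one_mem B) b hb z
  have hcoef : ∀ b : D.G → A, (∀ g, b g ∈ B) → ∀ h, E (star (u h) * ∑ g, u g * b g) = b h := by
    intro b hb h
    rw [Finset.mul_sum, map_sum, Finset.sum_eq_single h]
    · rw [← mul_assoc, hmodr _ _ (hb h), horth, if_pos rfl, one_mul]
    · intro g _ hg
      rw [← mul_assoc, hmodr _ _ (hb g), horth, if_neg hg.symm, zero_mul]
    · simp
  have hrep : ∀ v ∈ normalizer (B : Set A), ∃ g, v * star (u g) ∈ B ∧ star (u g) * v ∈ B := by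
    intro v hv
    let vN : normalizerSubgroup B := ⟨⟨v, hv.1⟩, hv⟩
    refine ⟨e.symm (vN : Weyl B), ?_⟩
    have hcls : (s (e (e.symm (vN : Weyl B))) : Weyl B) = vN := by
      rw [hs, MulEquiv.apply_symm_apply]
    exact ⟨mk_eq_mk_iff.mp hcls.symm, mk_eq_mk_iff'.mp hcls⟩
  -- The orthogonal projection onto `∑ u_g B`.
  let P : A →ₗ[ℂ] A :=
    ∑ g, LinearMap.mulLeft ℂ (u g) ∘ₗ E ∘ₗ LinearMap.mulLeft ℂ (star (u g))
  have hP : ∀ x, P x = ∑ g, u g * E (star (u g) * x) := fun x => by simp [P]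
  have hPcont : Continuous P := by
    have : (P : A → A) = fun x => ∑ g, u g * E (star (u g) * x) := funext hP
    rw [this]
    fun_prop
  have hPN : ∀ v ∈ normalizer (B : Set A), P v = v := by
    intro v hv
    obtain ⟨g, -, hg⟩ := hrep v hv
    have hvg : v = ∑ h, u h * (if h = g then star (u g) * v else 0) := by
      simp [← mul_assoc, Unitary.mul_star_self_of_mem (huU g)]
    have := hcoef (fun h => if h = g then star (u g) * v else 0)
      (fun h => by
        split_ifs
        · exact hg
        · exact zero_mem B)
    rw [← hvg] at this
    rw [hP, Finset.sum_congr rfl fun h _ => by rw [this h], ← hvg]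
  have hPid : ∀ x, P x = x := by
    have h1 := adjoin_normalizer_le (B := B) (S := LinearMap.eqLocus P LinearMap.id) hPN
    have h2 : IsClosed {x | P x = x} := isClosed_eq hPcont continuous_id
    have h3 := closure_minimal (t := {x | P x = x}) h1 h2
    intro x
    have hx : x ∈ (StarAlgebra.adjoin ℂ (normalizer (B : Set A))).topologicalClosure := by
      rw [show _ = _ from hreg]; trivial
    exact h3 hx
  refine ⟨D, u, by simp [u, hs1], fun g => (s (e g)).2, fun g h hgh hB => hne g h hgh hB.1,
    fun v hv => ?_, fun g h => ⟨?_, ?_⟩, ?_, fun x => ?_⟩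
  · obtain ⟨g, hg, -⟩ := hrep v hv
    exact ⟨g, hg, mul_mem hv.1 (Unitary.star_mem (huU g))⟩
  · have : ((s (e g) * s (e h) : normalizerSubgroup B) : Weyl B) = s (e (g * h)) := by
      rw [hs, QuotientGroup.mk_mul, hs, hs, map_mul]
    exact mk_eq_mk_iff.mp this
  · exact mul_mem (mul_mem (huU g) (huU h)) (Unitary.star_mem (huU _))
  · rintro g hg ⟨v, hvB, hvU, hv⟩
    have hvs := Unitary.star_mul_self_of_mem hvU
    have hus := Unitary.star_mul_self_of_mem (huU g)
    obtain ⟨c, hc⟩ := hirr (star v * u g) fun b hb => by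
      have h1 : u g * b = v * b * star v * u g := by
        rw [← hv b hb, mul_assoc _ (star (u g)), hus, mul_one]
      rw [mul_assoc, h1, ← mul_assoc, ← mul_assoc, ← mul_assoc, hvs, one_mul, mul_assoc]
    have hug : u g = c • v := by
      have : v * (star v * u g) = c • v := by rw [hc]; simp
      rwa [← mul_assoc, Unitary.mul_star_self_of_mem hvU, one_mul] at this
    refine hne g 1 hg ?_
    have h1 : u 1 = 1 := by simp [u, hs1]
    rw [h1, star_one, mul_one, hug]
    exact B.smul_mem hvB c
  · refine ⟨fun g => E (star (u g) * x), fun g => hE.1 _, ?_, fun b' hb' hx => ?_⟩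
    · rw [← hP, hPid]
    · funext g
      rw [hx]
      exact (hcoef b' hb' g).symm

end RegularInclusion
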